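/- There exists a simplicial complex 𝒦₀ over an infinite set S such that for every ε > 0, the closed ball of radius ε around 𝒦₀ (for the distance d) contains an infinite sequence (𝒦_r)_{r≥1} of simplicial complexes with pairwise distances d(𝒦_r, 𝒦_s) ≥ δ for all r ≠ s, for some δ > 0 depending on ε. Consequently, the metric space of simplicial complexes over S with the distance d is not locally compact. -/

import Mathlib

open scoped BigOperators

/-- A simplicial complex over the vertex set `S`: a nonempty collection of
nonempty finite subsets of `S`, closed under taking nonempty subsets. -/
def IsSimplicialComplex {S : Type*} (K : Set (Finset S)) : Prop :=
  K.Nonempty ∧ (∀ F ∈ K, F.Nonempty) ∧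
    ∀ F ∈ K, ∀ G : Finset S, G.Nonempty → G ⊆ F → G ∈ K

/-- Halved ℓ¹ distance between finitely supported real functions:
`d(α,β) = (1/2) ∑ₛ |α s - β s|`. -/
noncomputable def l1dist {S : Type*} (α β : S →₀ ℝ) : ℝ :=
  (1 / 2) * (α - β).sum fun _ x => |x|

/-- The ℓ¹ geometric realization of a collection `K` of finite subsets of `S`:
finitely supported probability vectors whose support is a face of `K`. -/
def realization {S : Type*} (K : Set (Finset S)) : Set (S →₀ ℝ) :=
  {α | (∀ s, 0 ≤ α s) ∧ (α.sum fun _ x => x) = 1 ∧ α.support ∈ K}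

/-- Distance from a point to a set of finitely supported functions. -/
noncomputable def distToSet {S : Type*} (α : S →₀ ℝ) (X : Set (S →₀ ℝ)) : ℝ :=
  sInf (l1dist α '' X)

/-- One-sided Hausdorff distance between (the realizations of) two complexes. -/
noncomputable def hdelta {S : Type*} (K₁ K₂ : Set (Finset S)) : ℝ :=
  sSup ((fun α => distToSet α (realization K₂)) '' realization K₁)

/-- Hausdorff distance between (the realizations of) two simplicial complexes. -/
noncomputable def hdist {S : Type*} (K₁ K₂ : Set (Finset S)) : ℝ :=
  max (hdelta K₁ K₂) (hdelta K₂ K₁)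

/-- `d(F, K)`: supremum of distances to `|K|₁` over probability vectors
supported exactly on `F`. -/
noncomputable def dFace {S : Type*} (F : Finset S) (K : Set (Finset S)) : ℝ :=
  sSup ((fun α => distToSet α (realization K)) ''
    {α : S →₀ ℝ | (∀ s, 0 ≤ α s) ∧ (α.sum fun _ x => x) = 1 ∧ α.support = F})

/-- The `n`-skeleton of a simplicial complex. -/
def skeleton {S : Type*} (n : ℕ) (K : Set (Finset S)) : Set (Finset S) :=
  {F | F ∈ K ∧ F.card ≤ n + 1}

/-!
Let `𝒦₀` be the complex of all nonempty finite subsets of `S`, and for a finite set `A` with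
`n ≥ 2` elements let `𝒦_A` consist of the nonempty finite sets that do not contain `A`.

A probability vector gives mass at most `1 / n` to some `a ∈ A`; moving that mass to another vertex
yields a point of `|𝒦_A|₁`, so `d(𝒦₀, 𝒦_A) ≤ 1 / n`. On the other hand, if `A ≠ B` both have `n`
elements, then `B` is a face of `𝒦_A` but not of `𝒦_B`, so every point of `|𝒦_B|₁` vanishes at some
vertex of `B`, where the barycenter of `B` has mass `1 / n`; hence `d(𝒦_A, 𝒦_B) ≥ 1 / n`. When `S`
is infinite there are infinitely many such sets, for every `n`.
-/

section

variable {S : Type*} {K L : Set (Finset S)} {A B : Finset S} {α β : S →₀ ℝ} {a b : S} {r : ℝ}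

lemma l1dist_nonneg (α β : S →₀ ℝ) : 0 ≤ l1dist α β :=
  mul_nonneg one_half_pos.le (Finset.sum_nonneg fun _ _ => abs_nonneg _)

lemma l1dist_self (α : S →₀ ℝ) : l1dist α α = 0 := by
  simp [l1dist]

lemma l1dist_le_half_sum_add_sum (hα : ∀ s, 0 ≤ α s) (hβ : ∀ s, 0 ≤ β s) :
    l1dist α β ≤ 1 / 2 * ((α.sum fun _ x => x) + β.sum fun _ x => x) := by
  classical
  rw [← Finsupp.sum_add_index' (fun _ => rfl) fun _ _ _ => rfl, l1dist,
    Finsupp.sum_of_support_subset (α - β) Finsupp.support_sub _ fun _ _ => abs_zero,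
    Finsupp.sum_of_support_subset (α + β) Finsupp.support_add _ fun _ _ => rfl]
  gcongr with s
  simpa [abs_of_nonneg (hα s), abs_of_nonneg (hβ s)] using abs_sub (α s) (β s)

/-- Since `α - β` has total mass zero, the coordinates other than `a` contribute at least
`|α a - β a|` to the `ℓ¹` norm as well, which cancels the factor `1 / 2`. -/
lemma abs_apply_sub_apply_le_l1dist (h : (α.sum fun _ x => x) = β.sum fun _ x => x) (a : S) :
    |α a - β a| ≤ l1dist α β := by
  have sum_eq_zero : ((α - β).sum fun _ x => x) = 0 := by
    rw [Finsupp.sum_sub_index fun _ _ _ => rfl, h, sub_self]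
  rw [← Finsupp.add_sum_erase' _ a _ fun _ => rfl] at sum_eq_zero
  have abs_le : |(α - β) a| ≤ ((α - β).erase a).sum fun _ x => |x| := by
    rw [eq_neg_of_add_eq_zero_left sum_eq_zero, abs_neg]
    exact Finset.abs_sum_le_sum_abs _ _
  rw [l1dist, ← Finsupp.add_sum_erase' _ a _ fun _ => abs_zero, ← Finsupp.sub_apply]
  linarith

lemma realization_mono (h : K ⊆ L) : realization K ⊆ realization L :=
  fun _ hα => ⟨hα.1, hα.2.1, h hα.2.2⟩

lemma l1dist_le_one (hα : α ∈ realization K) (hβ : β ∈ realization L) : l1dist α β ≤ 1 := by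
  refine (l1dist_le_half_sum_add_sum hα.1 hβ.1).trans_eq ?_
  rw [hα.2.1, hβ.2.1]
  norm_num

lemma distToSet_le_l1dist {X : Set (S →₀ ℝ)} (hβ : β ∈ X) : distToSet α X ≤ l1dist α β :=
  csInf_le ⟨0, Set.forall_mem_image.2 fun _ _ => l1dist_nonneg _ _⟩ (Set.mem_image_of_mem _ hβ)

lemma hdelta_le (hr : 0 ≤ r)
    (h : ∀ α ∈ realization K, ∃ β ∈ realization L, l1dist α β ≤ r) : hdelta K L ≤ r := by
  refine Real.sSup_le (Set.forall_mem_image.2 fun α hα => ?_) hr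
  obtain ⟨β, hβ, hαβ⟩ := h α hα
  exact (distToSet_le_l1dist hβ).trans hαβ

lemma le_hdelta (hL : (realization L).Nonempty) (hα : α ∈ realization K)
    (h : ∀ β ∈ realization L, r ≤ l1dist α β) : r ≤ hdelta K L := by
  have bdd : BddAbove ((fun α => distToSet α (realization L)) '' realization K) := by
    obtain ⟨β, hβ⟩ := hL
    exact ⟨1, Set.forall_mem_image.2 fun γ hγ =>
      (distToSet_le_l1dist hβ).trans (l1dist_le_one hγ hβ)⟩
  calc
    r ≤ distToSet α (realization L) := le_csInf (hL.image _) (Set.forall_mem_image.2 h)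
    _ ≤ hdelta K L := le_csSup bdd (Set.mem_image_of_mem _ hα)

lemma hdelta_nonpos_of_subset (h : K ⊆ L) : hdelta K L ≤ 0 :=
  hdelta_le le_rfl fun α hα => ⟨α, realization_mono h hα, (l1dist_self α).le⟩

/-- The barycenter of the simplex `A`, the uniform probability vector on `A`: the point of the
simplex used to measure how far `A` is from a complex without the face `A`. For `A = ∅` it is
`0`. -/
noncomputable def barycenter (A : Finset S) : S →₀ ℝ :=
  Finsupp.indicator A fun _ _ => (A.card : ℝ)⁻¹

lemma barycenter_apply_of_mem (ha : a ∈ A) : barycenter A a = (A.card : ℝ)⁻¹ :=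
  Finsupp.indicator_of_mem ha _

lemma support_barycenter (A : Finset S) : (barycenter A).support = A := by
  have apply_ne_zero (a : S) (ha : a ∈ A) : barycenter A a ≠ 0 := by
    rw [barycenter_apply_of_mem ha]
    exact inv_ne_zero (Nat.cast_ne_zero.2 (Finset.card_ne_zero_of_mem ha))
  exact (Finsupp.support_indicator_subset _ _).antisymm fun a ha =>
    Finsupp.mem_support_iff.2 (apply_ne_zero a ha)

lemma barycenter_mem_realization (hA : A.Nonempty) (hAK : A ∈ K) :
    barycenter A ∈ realization K := by
  classical
  refine ⟨fun s => ?_, ?_, by rwa [support_barycenter]⟩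
  · rw [barycenter, Finsupp.indicator_apply]
    split_ifs <;> positivity
  · rw [Finsupp.sum, support_barycenter, Finset.sum_congr rfl fun _ => barycenter_apply_of_mem,
      Finset.sum_const, nsmul_eq_mul]
    exact mul_inv_cancel₀ (Nat.cast_ne_zero.2 hA.card_ne_zero)

lemma IsSimplicialComplex.realization_nonempty (hK : IsSimplicialComplex K) :
    (realization K).Nonempty := by
  obtain ⟨⟨F, hF⟩, nonempty_of_mem, -⟩ := hK
  exact ⟨barycenter F, barycenter_mem_realization (nonempty_of_mem F hF) hF⟩

lemma inv_card_le_hdelta (hL : IsSimplicialComplex L) (hA : A.Nonempty) (hAK : A ∈ K)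
    (hAL : A ∉ L) : (A.card : ℝ)⁻¹ ≤ hdelta K L := by
  have hα := barycenter_mem_realization hA hAK
  refine le_hdelta hL.realization_nonempty hα fun β hβ => ?_
  obtain ⟨a, haA, haβ⟩ : ∃ a ∈ A, a ∉ β.support :=
    Finset.not_subset.1 fun h => hAL (hL.2.2 _ hβ.2.2 A hA h)
  calc
    (A.card : ℝ)⁻¹ = |barycenter A a - β a| := by
      rw [Finsupp.notMem_support_iff.1 haβ, sub_zero, barycenter_apply_of_mem haA,
        abs_of_nonneg (by positivity)]
    _ ≤ l1dist (barycenter A) β := abs_apply_sub_apply_le_l1dist (hα.2.1.trans hβ.2.1.symm) a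

/-- The full simplicial complex over `S`, whose faces are all nonempty finite subsets of `S`. It is
the center `𝒦₀` of the balls. -/
def fullComplex (S : Type*) : Set (Finset S) :=
  {F | F.Nonempty}

/-- The largest subcomplex of `fullComplex S` that does not have `A` as a face. These complexes
form the separated sequences near `fullComplex S`. For `A = ∅` it is empty, so not a complex. -/
def complexAvoiding (A : Finset S) : Set (Finset S) :=
  {F | F.Nonempty ∧ ¬A ⊆ F}

lemma isSimplicialComplex_fullComplex [Nonempty S] : IsSimplicialComplex (fullComplex S) :=
  ⟨⟨{Classical.arbitrary S}, Finset.singleton_nonempty _⟩, fun _ hF => hF, fun _ _ _ hG _ => hG⟩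

lemma isSimplicialComplex_complexAvoiding (hA : A.Nontrivial) :
    IsSimplicialComplex (complexAvoiding A) := by
  obtain ⟨a, -⟩ := hA.nonempty
  exact ⟨⟨{a}, Finset.singleton_nonempty a, hA.not_subset_singleton⟩, fun _ hF => hF.1,
    fun _ hF _ hG hGF => ⟨hG, fun hAG => hF.2 (hAG.trans hGF)⟩⟩

lemma complexAvoiding_subset_fullComplex (A : Finset S) : complexAvoiding A ⊆ fullComplex S :=
  fun _ hF => hF.1

lemma complexAvoiding_mono (h : A ⊆ B) : complexAvoiding A ⊆ complexAvoiding B :=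
  fun _ hF => ⟨hF.1, fun hB => hF.2 (h.trans hB)⟩

/-- The vector obtained from `α` by moving all the mass of the vertex `a` to the vertex `b`, used
to push a point of a realization off the faces containing `a`. -/
noncomputable def transferMass (a b : S) (α : S →₀ ℝ) : S →₀ ℝ :=
  α.erase a + Finsupp.single b (α a)

lemma sum_transferMass (a b : S) (α : S →₀ ℝ) :
    ((transferMass a b α).sum fun _ x => x) = α.sum fun _ x => x := by
  rw [transferMass, Finsupp.sum_add_index' (fun _ => rfl) fun _ _ _ => rfl,
    Finsupp.sum_single_index (by rfl), add_comm]
  exact Finsupp.add_sum_erase' α a (fun _ x => x) fun _ => rfl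

lemma transferMass_apply_self (hab : a ≠ b) (α : S →₀ ℝ) : transferMass a b α a = 0 := by
  rw [transferMass, Finsupp.add_apply, Finsupp.erase_same, Finsupp.single_eq_of_ne hab, add_zero]

lemma l1dist_transferMass (hab : a ≠ b) (α : S →₀ ℝ) :
    l1dist α (transferMass a b α) = |α a| := by
  classical
  have sub_eq : α - transferMass a b α = Finsupp.single a (α a) - Finsupp.single b (α a) := by
    nth_rw 1 [← Finsupp.single_add_erase a α]
    rw [transferMass]
    abel
  have support_subset :
      (Finsupp.single a (α a) - Finsupp.single b (α a)).support ⊆ {a, b} :=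
    Finsupp.support_sub.trans
      (Finset.union_subset_union Finsupp.support_single_subset Finsupp.support_single_subset)
  rw [l1dist, sub_eq, Finsupp.sum_of_support_subset _ support_subset _ fun _ _ => abs_zero,
    Finset.sum_pair hab]
  simp only [Finsupp.sub_apply, Finsupp.single_eq_same, Finsupp.single_eq_of_ne hab,
    Finsupp.single_eq_of_ne hab.symm, sub_zero, zero_sub, abs_neg]
  ring

lemma transferMass_mem_realization (hab : a ≠ b) (hα : α ∈ realization K) :
    transferMass a b α ∈ realization (complexAvoiding {a}) := by
  classical
  have sum_eq_one : ((transferMass a b α).sum fun _ x => x) = 1 :=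
    (sum_transferMass a b α).trans hα.2.1
  refine ⟨fun s => ?_, sum_eq_one, ?_, ?_⟩
  · rw [transferMass, Finsupp.add_apply, Finsupp.erase_apply, Finsupp.single_apply]
    have := hα.1 s
    have := hα.1 a
    split_ifs <;> positivity
  · refine Finsupp.support_nonempty_iff.2 fun h => ?_
    simp [h] at sum_eq_one
  · simp [transferMass_apply_self hab]

lemma sum_apply_le_one (hα : α ∈ realization K) (A : Finset S) : ∑ a ∈ A, α a ≤ 1 := by
  classical
  calc
    ∑ a ∈ A, α a ≤ ∑ a ∈ α.support ∪ A, α a :=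
      Finset.sum_le_sum_of_subset_of_nonneg Finset.subset_union_right fun s _ _ => hα.1 s
    _ = α.sum fun _ x => x :=
      (Finsupp.sum_of_support_subset α Finset.subset_union_left (fun _ x => x) fun _ _ => rfl).symm
    _ = 1 := hα.2.1

lemma exists_mem_apply_le_inv_card (hα : α ∈ realization K) (hA : A.Nonempty) :
    ∃ a ∈ A, α a ≤ (A.card : ℝ)⁻¹ := by
  refine Finset.exists_le_of_sum_le hA ?_
  rw [Finset.sum_const, nsmul_eq_mul, mul_inv_cancel₀ (Nat.cast_ne_zero.2 hA.card_ne_zero)]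
  exact sum_apply_le_one hα A

lemma hdelta_complexAvoiding_le (K : Set (Finset S)) (hA : A.Nontrivial) :
    hdelta K (complexAvoiding A) ≤ (A.card : ℝ)⁻¹ := by
  refine hdelta_le (by positivity) fun α hα => ?_
  obtain ⟨a, haA, ha⟩ := exists_mem_apply_le_inv_card hα hA.nonempty
  obtain ⟨b, -, hba⟩ := hA.exists_ne a
  have avoiding_subset : complexAvoiding {a} ⊆ complexAvoiding A :=
    complexAvoiding_mono (Finset.singleton_subset_iff.2 haA)
  refine ⟨transferMass a b α,
    realization_mono avoiding_subset (transferMass_mem_realization hba.symm hα), ?_⟩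
  rwa [l1dist_transferMass hba.symm, abs_of_nonneg (hα.1 a)]

lemma hdist_fullComplex_complexAvoiding_le (hA : A.Nontrivial) :
    hdist (fullComplex S) (complexAvoiding A) ≤ (A.card : ℝ)⁻¹ :=
  max_le (hdelta_complexAvoiding_le _ hA)
    ((hdelta_nonpos_of_subset (complexAvoiding_subset_fullComplex A)).trans (by positivity))

lemma inv_card_le_hdist_complexAvoiding (hB : B.Nontrivial) (hAB : ¬A ⊆ B) :
    (B.card : ℝ)⁻¹ ≤ hdist (complexAvoiding A) (complexAvoiding B) :=
  le_max_of_le_left <| inv_card_le_hdelta (isSimplicialComplex_complexAvoiding hB) hB.nonempty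
    ⟨hB.nonempty, hAB⟩ fun hBB => hBB.2 subset_rfl

end

/-- Over an infinite vertex set, the space of simplicial complexes with the
Hausdorff distance is not locally compact: there is a complex `𝒦₀` such that
every closed `ε`-ball around it contains an infinite `δ`-separated sequence of
simplicial complexes, for some `δ > 0`. -/
theorem stmt17 {S : Type*} [Infinite S] :
    ∃ K₀ : Set (Finset S), IsSimplicialComplex K₀ ∧
      ∀ ε : ℝ, 0 < ε → ∃ δ : ℝ, 0 < δ ∧ ∃ Ks : ℕ → Set (Finset S),
        (∀ r, IsSimplicialComplex (Ks r)) ∧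
        (∀ r, hdist K₀ (Ks r) ≤ ε) ∧
        (∀ r s, r ≠ s → δ ≤ hdist (Ks r) (Ks s)) := by
  refine ⟨fullComplex S, isSimplicialComplex_fullComplex, fun ε hε => ?_⟩
  obtain ⟨n, hnε, hn⟩ : ∃ n : ℕ, (n : ℝ)⁻¹ ≤ ε ∧ 1 < n :=
    ((tendsto_inv_atTop_nhds_zero_nat (𝕜 := ℝ)).eventually_le_const hε |>.and
      (Filter.eventually_gt_atTop 1)).exists
  have : NeZero n := ⟨by omega⟩
  let A : ℕ ↪ Set.powersetCard S n := Infinite.natEmbedding _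
  have card_A (r : ℕ) : (A r : Finset S).card = n := Set.powersetCard.card_eq _
  have nontrivial_A (r : ℕ) : (A r : Finset S).Nontrivial :=
    Finset.one_lt_card_iff_nontrivial.1 (by rwa [card_A])
  have not_subset (r s : ℕ) (hrs : r ≠ s) : ¬(A r : Finset S) ⊆ A s :=
    mt Set.powersetCard.eq_iff_subset.2 (A.injective.ne hrs)
  refine ⟨(n : ℝ)⁻¹, by positivity, fun r => complexAvoiding (A r),
    fun r => isSimplicialComplex_complexAvoiding (nontrivial_A r), fun r => ?_, fun r s hrs => ?_⟩
  · exact (hdist_fullComplex_complexAvoiding_le (nontrivial_A r)).trans (by rwa [card_A])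
  · simpa only [card_A] using
      inv_card_le_hdist_complexAvoiding (nontrivial_A s) (not_subset r s hrs)
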